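/- For all integers r, s, k with 1 ≤ r ≤ s and 0 ≤ k ≤ r, the identity of integers C(s, s−k) · D_{k+1}(r+1, s+1) = C(r+s−k, s−k) · D_k(r,s) holds. -/

import Mathlib

/-!
With `a = r - k` and `b = s - k`, the determinant is that of the Toeplitz matrix
`C(a + b, b + i - j)`, whose entry is the coefficient of `x ^ (b + i)` in `x ^ j (1 + x) ^ (a + b)`.
The unitriangular row operations with coefficients `C(i, l)` replace it by the coefficient of
`x ^ (b + i)` in `x ^ j (1 + x) ^ (a + b + i)`, that is, by
`(a + b + i)! / ((b + i)! (a + j)!) * (b + i) (b + i - 1) ⋯ (b + i - j + 1)`.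
After the row and column factors are pulled out, a Vandermonde determinant in monic polynomials of
`b + i` remains, and one obtains MacMahon's product
`∏ i < k, (a + b + i)! i! / ((a + i)! (b + i)!)`.
The identity is the quotient of this formula for two consecutive values of `k`.
-/

/-- The `k × k` integer matrix whose `(i, j)` entry is the binomial coefficient
`C(r + s - 2k, s + i - j - k)`, where `C(a, b) = 0` if `b < 0` or `b > a`. -/
def Dmat (r s k : ℕ) : Matrix (Fin k) (Fin k) ℤ :=
  Matrix.of fun i j =>
    if (j : ℕ) + k ≤ s + (i : ℕ) then
      ((r + s - 2 * k).choose (s + (i : ℕ) - (j : ℕ) - k) : ℤ)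
    else 0

/-- The determinant `D_k(r, s)`. -/
def Ddet (r s k : ℕ) : ℤ := (Dmat r s k).det

open Polynomial Finset
open scoped Nat

theorem coeff_one_add_X_pow_mul {R : Type*} [Semiring R] (f : R[X]) (b i : ℕ) :
    ((1 + X) ^ i * f).coeff (b + i) = ∑ l ∈ range (i + 1), (i.choose l : R) * f.coeff (b + l) := by
  rw [(Commute.one_left (X : R[X])).add_pow, sum_mul, finsetSum_coeff]
  refine sum_congr rfl fun l hl => ?_
  have hshift : b + i = b + l + (i - l) := by
    have : l ≤ i := mem_range_succ_iff.mp hl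
    lia
  rw [one_pow, one_mul, X_pow_mul, mul_assoc, ← C_eq_natCast, coeff_C_mul, hshift,
    coeff_X_pow_mul]

theorem det_coeff_one_add_X_pow_mul {R : Type*} [CommRing R] {n : ℕ} (f : Fin n → R[X]) (b : ℕ) :
    (Matrix.of fun i j : Fin n => ((1 + X) ^ (i : ℕ) * f j).coeff (b + i)).det =
      (Matrix.of fun i j : Fin n => (f j).coeff (b + i)).det := by
  let L : Matrix (Fin n) (Fin n) R := Matrix.of fun i l => ((i : ℕ).choose l : R)
  have hL : L.IsLowerTriangular := fun i l hil => by
    have : (i : ℕ) < l := hil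
    simp [L, Nat.choose_eq_zero_of_lt this]
  have hLdet : L.det = 1 := by simp [Matrix.det_of_isLowerTriangular L hL, L]
  have hmul : (Matrix.of fun i j : Fin n => ((1 + X) ^ (i : ℕ) * f j).coeff (b + i)) =
      L * Matrix.of fun i j : Fin n => (f j).coeff (b + i) := by
    ext i j
    simp only [Matrix.mul_apply, Matrix.of_apply, L, coeff_one_add_X_pow_mul]
    rw [Fin.sum_univ_eq_sum_range (fun l => ((i : ℕ).choose l : R) * (f j).coeff (b + l))]
    refine sum_subset (range_subset_range.mpr i.isLt) fun l _ hl => ?_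
    rw [Nat.choose_eq_zero_of_lt (by simpa using hl), Nat.cast_zero, zero_mul]
  rw [hmul, Matrix.det_mul, hLdet, one_mul]

theorem factorial_mul_coeff_X_pow_mul_one_add_X_pow {R : Type*} [CommSemiring R] (a m j : ℕ) :
    (m ! : R) * ((a + j)! * (X ^ j * (1 + X) ^ (a + m) : R[X]).coeff m) =
      (a + m)! * m.descFactorial j := by
  rw [coeff_X_pow_mul', coeff_one_add_X_pow]
  split_ifs with hj
  · obtain ⟨d, rfl⟩ := Nat.exists_eq_add_of_le hj
    have hchoose := Nat.add_choose_mul_factorial_mul_factorial (a + j) d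
    have hdesc := Nat.factorial_mul_descFactorial hj
    rw [Nat.add_sub_cancel_left] at hdesc ⊢
    rw [← add_assoc, ← hchoose, ← hdesc]
    push_cast
    ring
  · rw [Nat.descFactorial_of_lt (not_le.mp hj)]
    simp

theorem det_descFactorial_add {R : Type*} [CommRing R] [IsDomain R] (b n : ℕ) :
    (Matrix.of fun i j : Fin n => ((b + i).descFactorial j : R)).det =
      ∏ i ∈ range n, (i ! : R) := by
  have hvand : (Matrix.of fun i j : Fin n => ((b + i).descFactorial j : R)).det =
      (Matrix.vandermonde fun i : Fin n => (i + b : R)).det := by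
    rw [Matrix.det_eval_matrixOfPolynomials_eq_det_vandermonde _
      (fun j => descPochhammer R j) (fun j => descPochhammer_natDegree R j)
      (fun j => monic_descPochhammer R j)]
    simp only [← Nat.cast_add, descPochhammer_eval_eq_descFactorial, add_comm]
  rw [hvand, Matrix.det_vandermonde_add]
  cases n with
  | zero => simp
  | succ n =>
    rw [Matrix.det_vandermonde_id_eq_superFactorial, ← Nat.prod_range_succ_factorial, Nat.cast_prod]

theorem Dmat_add_add_apply (a b : ℕ) {k : ℕ} (i j : Fin k) :
    Dmat (a + k) (b + k) k i j = (X ^ (j : ℕ) * (1 + X) ^ (a + b) : ℤ[X]).coeff (b + i) := by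
  have hn : a + k + (b + k) - 2 * k = a + b := by lia
  have hm : b + k + (i : ℕ) - j - k = b + i - j := by lia
  have hj : (j : ℕ) + k ≤ b + k + i ↔ (j : ℕ) ≤ b + i := by lia
  simp only [Dmat, Matrix.of_apply, coeff_X_pow_mul', coeff_one_add_X_pow, hn, hm, hj]

theorem Ddet_add_add_eq_det_coeff (a b k : ℕ) :
    Ddet (a + k) (b + k) k = (Matrix.of fun i j : Fin k =>
      (X ^ (j : ℕ) * (1 + X) ^ (a + (b + i)) : ℤ[X]).coeff (b + i)).det := by
  have hD : Dmat (a + k) (b + k) k = Matrix.of fun i j : Fin k =>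
      (X ^ (j : ℕ) * (1 + X) ^ (a + b) : ℤ[X]).coeff (b + i) :=
    Matrix.ext (Dmat_add_add_apply a b)
  rw [Ddet, hD, ← det_coeff_one_add_X_pow_mul]
  simp only [mul_left_comm, ← pow_add, add_comm, add_left_comm]

theorem prod_factorial_mul_Ddet_add_add (a b k : ℕ) :
    (∏ i ∈ range k, ((a + i)! * (b + i)! : ℤ)) * Ddet (a + k) (b + k) k =
      ∏ i ∈ range k, ((a + b + i)! * i ! : ℤ) := by
  let T : Matrix (Fin k) (Fin k) ℤ := Matrix.of fun i j =>
    (X ^ (j : ℕ) * (1 + X) ^ (a + (b + i)) : ℤ[X]).coeff (b + i)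
  have hscale :
      (Matrix.of fun i j : Fin k => ((b + i)! : ℤ) *
        (Matrix.of fun i j : Fin k => ((a + j)! : ℤ) * T i j) i j) =
      Matrix.of fun i j : Fin k => ((a + (b + i))! : ℤ) *
        (Matrix.of fun i j : Fin k => ((b + i).descFactorial j : ℤ)) i j := by
    ext i j
    exact factorial_mul_coeff_X_pow_mul_one_add_X_pow a (b + i) j
  have hdet := congrArg Matrix.det hscale
  rw [Matrix.det_mul_column, Matrix.det_mul_row, Matrix.det_mul_column, det_descFactorial_add,
    ← Ddet_add_add_eq_det_coeff,
    Fin.prod_univ_eq_prod_range (fun i => ((b + i)! : ℤ)),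
    Fin.prod_univ_eq_prod_range (fun i => ((a + i)! : ℤ)),
    Fin.prod_univ_eq_prod_range (fun i => ((a + (b + i))! : ℤ))] at hdet
  simp only [prod_mul_distrib, add_assoc]
  linear_combination hdet

theorem factorial_mul_Ddet_succ (a b k : ℕ) :
    ((a + k)! * (b + k)! : ℤ) * Ddet (a + k + 1) (b + k + 1) (k + 1) =
      ((a + b + k)! * k ! : ℤ) * Ddet (a + k) (b + k) k := by
  have hprod : (∏ i ∈ range k, ((a + i)! * (b + i)! : ℤ)) ≠ 0 := by positivity
  have hk := prod_factorial_mul_Ddet_add_add a b k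
  have hk' := prod_factorial_mul_Ddet_add_add a b (k + 1)
  rw [prod_range_succ, prod_range_succ, ← hk] at hk'
  refine mul_left_cancel₀ hprod ?_
  linear_combination hk'

theorem stmt_13_general (r s k : ℕ) (hkr : k ≤ r) (hks : k ≤ s) :
    (s.choose (s - k) : ℤ) * Ddet (r + 1) (s + 1) (k + 1) =
      ((r + s - k).choose (s - k) : ℤ) * Ddet r s k := by
  obtain ⟨a, rfl⟩ := Nat.exists_eq_add_of_le' hkr
  obtain ⟨b, rfl⟩ := Nat.exists_eq_add_of_le' hks
  have hn : a + k + (b + k) - k = a + k + b := by lia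
  have hleft : ((k + b).choose b * k ! * b ! : ℤ) = (k + b)! := mod_cast
    Nat.add_choose_mul_factorial_mul_factorial k b
  have hright : ((a + k + b).choose b * (a + k)! * b ! : ℤ) = (a + k + b)! := mod_cast
    Nat.add_choose_mul_factorial_mul_factorial (a + k) b
  have hratio := factorial_mul_Ddet_succ a b k
  rw [add_comm b k, add_right_comm a b k, ← hleft, ← hright] at hratio
  rw [Nat.add_sub_cancel, hn, add_comm b k]
  have hfact : ((a + k)! * k ! * b ! : ℤ) ≠ 0 := by positivity
  refine mul_left_cancel₀ hfact ?_
  linear_combination hratio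

/-- `C(s, s−k) · D_{k+1}(r+1, s+1) = C(r+s−k, s−k) · D_k(r,s)`. -/
theorem stmt_13 (r s k : ℕ) (hr : 1 ≤ r) (hrs : r ≤ s) (hkr : k ≤ r) :
    (s.choose (s - k) : ℤ) * Ddet (r + 1) (s + 1) (k + 1) =
      ((r + s - k).choose (s - k) : ℤ) * Ddet r s k :=
  stmt_13_general r s k hkr (hkr.trans hrs)
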